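/- Fix N, n ∈ ℕ with 2n < N and y ∈ ℝ^{N−2n} with strictly increasing coordinates. Let x = (x⁽¹⁾, x⁽²⁾) ∈ ℝ^n × ℝ^n have all coordinates pairwise distinct from each other and from the y_k. Then for every v ∈ ℝ^{2n}, ⟨v, D²H_y(x) v⟩ ≥ N‖v‖². Moreover, if there are indices L_1 < L_2 with L_1 + 1 ≤ N − 2n and L_2 + 1 ≤ N − 2n such that every x_i⁽¹⁾ lies in the open interval (y_{L_1}, y_{L_1+1}), every x_i⁽²⁾ lies in (y_{L_2}, y_{L_2+1}), and both gaps satisfy y_{L_1+1} − y_{L_1} ≤ 2n/N and y_{L_2+1} − y_{L_2} ≤ 2n/N, then ⟨v, D²H_y(x) v⟩ ≥ (N + N²/(2n²)) ‖v‖² for every v ∈ ℝ^{2n}. -/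

import Mathlib

noncomputable section

/-- The two-cluster Hamiltonian `H_y` as a function on `ℝ^{2n}` (Euclidean space), where the
first `n` coordinates are `x⁽¹⁾` and the last `n` coordinates are `x⁽²⁾`. -/
def clusterHam (N n : ℕ) (y : Fin (N - 2 * n) → ℝ)
    (x : EuclideanSpace ℝ (Fin (n + n))) : ℝ :=
  (N : ℝ) * ((1 / 2) * ∑ i : Fin n, ((x (Fin.castAdd n i)) ^ 2 + (x (Fin.natAdd n i)) ^ 2)
    - (1 / N) * ∑ i : Fin n, ∑ j ∈ Finset.Ioi i,
        Real.log ((x (Fin.castAdd n i) - x (Fin.castAdd n j)) ^ 2)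
    - (1 / N) * ∑ i : Fin n, ∑ j ∈ Finset.Ioi i,
        Real.log ((x (Fin.natAdd n i) - x (Fin.natAdd n j)) ^ 2)
    - (1 / N) * ∑ i : Fin n, ∑ j : Fin n,
        Real.log ((x (Fin.castAdd n i) - x (Fin.natAdd n j)) ^ 2)
    - (1 / N) * ∑ k, ∑ i : Fin n,
        (Real.log ((x (Fin.castAdd n i) - y k) ^ 2)
          + Real.log ((x (Fin.natAdd n i) - y k) ^ 2)))

/-- `HasHess x v f q`: `f` is twice differentiable at `x`, with Hessian form at `v` equal to `q`. -/
def HasHess {E : Type*} [NormedAddCommGroup E] [NormedSpace ℝ E] (x v : E) (f : E → ℝ)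
    (q : ℝ) : Prop :=
  ∃ f' : E → (E →L[ℝ] ℝ), (∀ᶠ z in nhds x, HasFDerivAt f (f' z) z) ∧
    ∃ f'' : E →L[ℝ] (E →L[ℝ] ℝ), HasFDerivAt f' f'' x ∧ f'' v v = q

section HasHess
variable {E : Type*} [NormedAddCommGroup E] [NormedSpace ℝ E] {x v : E}

theorem HasHess.eq {f : E → ℝ} {q : ℝ} (h : HasHess x v f q) :
    fderiv ℝ (fderiv ℝ f) x v v = q := by
  obtain ⟨f', h1, f'', h2, rfl⟩ := h
  have : fderiv ℝ f =ᶠ[nhds x] f' := h1.mono fun z hz => hz.fderiv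
  rw [this.fderiv_eq, h2.fderiv]

theorem HasHess.add {f g : E → ℝ} {p q : ℝ} (hf : HasHess x v f p) (hg : HasHess x v g q) :
    HasHess x v (fun z => f z + g z) (p + q) := by
  obtain ⟨f', h1, f'', h2, rfl⟩ := hf
  obtain ⟨g', k1, g'', k2, rfl⟩ := hg
  refine ⟨fun z => f' z + g' z, ?_, f'' + g'', h2.add k2, by simp⟩
  filter_upwards [h1, k1] with z a b using a.add b

theorem HasHess.const_mul {f : E → ℝ} {p : ℝ} (c : ℝ) (hf : HasHess x v f p) :
    HasHess x v (fun z => c * f z) (c * p) := by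
  obtain ⟨f', h1, f'', h2, rfl⟩ := hf
  refine ⟨fun z => c • f' z, ?_, c • f'', h2.const_smul c, by simp⟩
  filter_upwards [h1] with z a using a.const_mul c

theorem HasHess.sub {f g : E → ℝ} {p q : ℝ} (hf : HasHess x v f p) (hg : HasHess x v g q) :
    HasHess x v (fun z => f z - g z) (p - q) := by
  have := hf.add (hg.const_mul (-1))
  simpa [sub_eq_add_neg] using this

theorem HasHess.sum {ι : Type*} (s : Finset ι) {f : ι → E → ℝ} {p : ι → ℝ}
    (h : ∀ i ∈ s, HasHess x v (f i) (p i)) :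
    HasHess x v (fun z => ∑ i ∈ s, f i z) (∑ i ∈ s, p i) := by
  classical
  induction s using Finset.induction_on with
  | empty =>
    refine ⟨fun _ => 0, ?_, 0, hasFDerivAt_const _ _, by simp⟩
    exact Filter.Eventually.of_forall fun z => by simpa using hasFDerivAt_const (0 : ℝ) z
  | insert a s ha ih =>
    simp only [Finset.sum_insert ha]
    exact (h a (by simp)).add (ih fun i hi => h i (by simp [hi]))

theorem HasHess.comp (l : E →L[ℝ] ℝ) {g g' : ℝ → ℝ} {g'' : ℝ}
    (h1 : ∀ᶠ t in nhds (l x), HasDerivAt g (g' t) t) (h2 : HasDerivAt g' g'' (l x)) :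
    HasHess x v (fun z => g (l z)) (g'' * l v ^ 2) := by
  refine ⟨fun z => g' (l z) • l, ?_, (g'' • l).smulRight l, ?_, ?_⟩
  · filter_upwards [l.continuous.continuousAt.eventually h1] with z hz
    exact hz.comp_hasFDerivAt z l.hasFDerivAt
  · exact (h2.comp_hasFDerivAt x l.hasFDerivAt).smul_const l
  · simp; ring

theorem HasHess.sq (l : E →L[ℝ] ℝ) : HasHess x v (fun z => l z ^ 2) (2 * l v ^ 2) := by
  refine HasHess.comp (g := fun t => t ^ 2) (g' := fun t => 2 * t) l
    (Filter.Eventually.of_forall fun t => ?_) ?_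
  · simpa using hasDerivAt_pow 2 t
  · simpa using (hasDerivAt_id (l x)).const_mul 2

theorem HasHess.log (l : E →L[ℝ] ℝ) (c : ℝ) (hc : l x ≠ c) :
    HasHess x v (fun z => Real.log ((l z - c) ^ 2)) (-2 / (l x - c) ^ 2 * l v ^ 2) := by
  refine HasHess.comp (g := fun t => Real.log ((t - c) ^ 2)) (g' := fun t => 2 * (t - c)⁻¹) l ?_ ?_
  · filter_upwards [isOpen_ne.mem_nhds hc] with t ht
    have ht' : t - c ≠ 0 := sub_ne_zero.2 ht
    have hd : HasDerivAt (fun s : ℝ => s - c) 1 t := (hasDerivAt_id t).sub_const c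
    have hp : HasDerivAt (fun s : ℝ => (s - c) ^ 2) (2 * (t - c)) t := by
      simpa using hd.fun_pow 2
    have := hp.log (pow_ne_zero 2 ht')
    convert this using 1
    field_simp
  · have ht' : l x - c ≠ 0 := sub_ne_zero.2 hc
    have hd : HasDerivAt (fun s : ℝ => s - c) 1 (l x) := (hasDerivAt_id (l x)).sub_const c
    have := (hd.fun_inv ht').const_mul 2
    have e : -2 / (l x - c) ^ 2 = 2 * (-1 / (l x - c) ^ 2) := by ring
    rw [e]
    exact this

end HasHess

theorem clusterHam_hessian_eq (N n : ℕ) (hn : 2 * n < N)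
    (y : Fin (N - 2 * n) → ℝ)
    (x : EuclideanSpace ℝ (Fin (n + n)))
    (h1 : ∀ i j : Fin n, i ≠ j → x (Fin.castAdd n i) ≠ x (Fin.castAdd n j))
    (h2 : ∀ i j : Fin n, i ≠ j → x (Fin.natAdd n i) ≠ x (Fin.natAdd n j))
    (h12 : ∀ i j : Fin n, x (Fin.castAdd n i) ≠ x (Fin.natAdd n j))
    (hy1 : ∀ (i : Fin n) (k : Fin (N - 2 * n)), x (Fin.castAdd n i) ≠ y k)
    (hy2 : ∀ (i : Fin n) (k : Fin (N - 2 * n)), x (Fin.natAdd n i) ≠ y k)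
    (v : EuclideanSpace ℝ (Fin (n + n))) :
    (N : ℝ) * ‖v‖ ^ 2 + ∑ k, ∑ i : Fin n,
        (2 / (x (Fin.castAdd n i) - y k) ^ 2 * v (Fin.castAdd n i) ^ 2
          + 2 / (x (Fin.natAdd n i) - y k) ^ 2 * v (Fin.natAdd n i) ^ 2)
      ≤ fderiv ℝ (fderiv ℝ (clusterHam N n y)) x v v := by
  have hsq : ∀ a, HasHess x v (fun z : EuclideanSpace ℝ (Fin (n + n)) => z a ^ 2)
      (2 * v a ^ 2) := fun a => HasHess.sq (EuclideanSpace.proj a)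
  have hlog : ∀ a c, x a ≠ c →
      HasHess x v (fun z : EuclideanSpace ℝ (Fin (n + n)) => Real.log ((z a - c) ^ 2))
      (-2 / (x a - c) ^ 2 * v a ^ 2) := fun a c h => HasHess.log (EuclideanSpace.proj a) c h
  have hpair : ∀ a b, x a ≠ x b →
      HasHess x v (fun z : EuclideanSpace ℝ (Fin (n + n)) => Real.log ((z a - z b) ^ 2))
      (-2 / (x a - x b) ^ 2 * (v a - v b) ^ 2) := fun a b h => by
    have := HasHess.log (x := x) (v := v)
      ((EuclideanSpace.proj a : EuclideanSpace ℝ (Fin (n + n)) →L[ℝ] ℝ)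
        - EuclideanSpace.proj b) 0 (by simpa [sub_eq_zero] using h)
    simpa using this
  have H := HasHess.const_mul (N : ℝ) (HasHess.sub (HasHess.sub (HasHess.sub (HasHess.sub
      (HasHess.const_mul (1 / 2 : ℝ) (HasHess.sum Finset.univ fun (i : Fin n) _ => (hsq (Fin.castAdd n i)).add (hsq (Fin.natAdd n i))))
      (HasHess.const_mul (1 / N : ℝ) (HasHess.sum Finset.univ fun (i : Fin n) _ => HasHess.sum (Finset.Ioi i) fun j hj =>
        hpair _ _ (h1 i j (Finset.mem_Ioi.1 hj).ne))))
      (HasHess.const_mul (1 / N : ℝ) (HasHess.sum Finset.univ fun (i : Fin n) _ => HasHess.sum (Finset.Ioi i) fun j hj =>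
        hpair _ _ (h2 i j (Finset.mem_Ioi.1 hj).ne))))
      (HasHess.const_mul (1 / N : ℝ) (HasHess.sum Finset.univ fun (i : Fin n) _ => HasHess.sum Finset.univ fun (j : Fin n) _ =>
        hpair _ _ (h12 i j))))
      (HasHess.const_mul (1 / N : ℝ) (HasHess.sum Finset.univ fun (k : Fin (N - 2 * n)) _ => HasHess.sum Finset.univ fun (i : Fin n) _ =>
        (hlog _ _ (hy1 i k)).add (hlog _ _ (hy2 i k)))))
  have H' : fderiv ℝ (fderiv ℝ (clusterHam N n y)) x v v = _ := H.eq
  rw [H']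
  have hN : (N : ℝ) ≠ 0 := by
    have : N ≠ 0 := by omega
    exact_mod_cast this
  have hnorm : ‖v‖ ^ 2
      = ∑ i : Fin n, (v (Fin.castAdd n i) ^ 2 + v (Fin.natAdd n i) ^ 2) := by
    rw [EuclideanSpace.norm_sq_eq, Fin.sum_univ_add, Finset.sum_add_distrib]
    simp
  have key : ∀ a d : ℝ, -2 / d ^ 2 * a ^ 2 ≤ 0 := fun a d => by
    have : 0 ≤ 2 / d ^ 2 * a ^ 2 := by positivity
    rw [neg_div, neg_mul]; linarith
  have e1 := Finset.sum_nonpos (s := (Finset.univ : Finset (Fin n))) fun i _ =>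
    Finset.sum_nonpos (s := Finset.Ioi i) fun j _ =>
      key (v (Fin.castAdd n i) - v (Fin.castAdd n j)) (x (Fin.castAdd n i) - x (Fin.castAdd n j))
  have e2 := Finset.sum_nonpos (s := (Finset.univ : Finset (Fin n))) fun i _ =>
    Finset.sum_nonpos (s := Finset.Ioi i) fun j _ =>
      key (v (Fin.natAdd n i) - v (Fin.natAdd n j)) (x (Fin.natAdd n i) - x (Fin.natAdd n j))
  have e3 := Finset.sum_nonpos (s := (Finset.univ : Finset (Fin n))) fun i _ =>
    Finset.sum_nonpos (s := (Finset.univ : Finset (Fin n))) fun j _ =>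
      key (v (Fin.castAdd n i) - v (Fin.natAdd n j)) (x (Fin.castAdd n i) - x (Fin.natAdd n j))
  have e4 : ∑ i : Fin n, (2 * v (Fin.castAdd n i) ^ 2 + 2 * v (Fin.natAdd n i) ^ 2)
      = 2 * ‖v‖ ^ 2 := by
    rw [hnorm, Finset.mul_sum]
    exact Finset.sum_congr rfl fun i _ => by ring
  have e5 : ∑ k, ∑ i : Fin n,
        (-2 / (x (Fin.castAdd n i) - y k) ^ 2 * v (Fin.castAdd n i) ^ 2
          + -2 / (x (Fin.natAdd n i) - y k) ^ 2 * v (Fin.natAdd n i) ^ 2)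
      = - ∑ k, ∑ i : Fin n,
        (2 / (x (Fin.castAdd n i) - y k) ^ 2 * v (Fin.castAdd n i) ^ 2
          + 2 / (x (Fin.natAdd n i) - y k) ^ 2 * v (Fin.natAdd n i) ^ 2) := by
    simp only [← Finset.sum_neg_distrib]
    exact Finset.sum_congr rfl fun k _ => Finset.sum_congr rfl fun i _ => by ring
  rw [e4, e5]
  simp only [mul_sub, ← mul_assoc, mul_one_div_cancel hN, one_mul]
  linarith

/-- One-dimensional bound from confinement to a short gap. -/
theorem gap_bound {N n : ℝ} (hN : 0 < N) (hn : 0 < n) {a b t : ℝ} (ht : t ∈ Set.Ioo a b)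
    (h : b - a ≤ 2 * n / N) : N ^ 2 / (2 * n ^ 2) ≤ 2 / (t - a) ^ 2 := by
  have h0 : 0 < t - a := sub_pos.2 ht.1
  have h1 : t - a ≤ 2 * n / N := by linarith [ht.2]
  have h2 : (t - a) ^ 2 ≤ (2 * n / N) ^ 2 := by gcongr
  calc N ^ 2 / (2 * n ^ 2) = 2 / (2 * n / N) ^ 2 := by field_simp
    _ ≤ _ := by gcongr

/-- Convexity lower bounds for the Hessian quadratic form of the two-cluster Hamiltonian:
it is always at least `N‖v‖²`, and at least `(N + N²/(2n²))‖v‖²` when the two clusters are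
confined to external eigenvalue gaps of width at most `2n/N`. -/
theorem clusterHam_hessian_lower_bound (N n : ℕ) (hn : 2 * n < N)
    (y : Fin (N - 2 * n) → ℝ) (hy : StrictMono y)
    (x : EuclideanSpace ℝ (Fin (n + n)))
    (h1 : ∀ i j : Fin n, i ≠ j → x (Fin.castAdd n i) ≠ x (Fin.castAdd n j))
    (h2 : ∀ i j : Fin n, i ≠ j → x (Fin.natAdd n i) ≠ x (Fin.natAdd n j))
    (h12 : ∀ i j : Fin n, x (Fin.castAdd n i) ≠ x (Fin.natAdd n j))
    (hy1 : ∀ (i : Fin n) (k : Fin (N - 2 * n)), x (Fin.castAdd n i) ≠ y k)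
    (hy2 : ∀ (i : Fin n) (k : Fin (N - 2 * n)), x (Fin.natAdd n i) ≠ y k) :
    (∀ v : EuclideanSpace ℝ (Fin (n + n)),
        (N : ℝ) * ‖v‖ ^ 2 ≤ fderiv ℝ (fderiv ℝ (clusterHam N n y)) x v v) ∧
      ∀ (L₁ L₂ : ℕ) (hL₁ : L₁ + 1 < N - 2 * n) (hL₂ : L₂ + 1 < N - 2 * n), L₁ < L₂ →
        (∀ i : Fin n, x (Fin.castAdd n i)
          ∈ Set.Ioo (y ⟨L₁, Nat.lt_of_succ_lt hL₁⟩) (y ⟨L₁ + 1, hL₁⟩)) →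
        (∀ i : Fin n, x (Fin.natAdd n i)
          ∈ Set.Ioo (y ⟨L₂, Nat.lt_of_succ_lt hL₂⟩) (y ⟨L₂ + 1, hL₂⟩)) →
        y ⟨L₁ + 1, hL₁⟩ - y ⟨L₁, Nat.lt_of_succ_lt hL₁⟩ ≤ 2 * n / N →
        y ⟨L₂ + 1, hL₂⟩ - y ⟨L₂, Nat.lt_of_succ_lt hL₂⟩ ≤ 2 * n / N →
        ∀ v : EuclideanSpace ℝ (Fin (n + n)),
          ((N : ℝ) + (N : ℝ) ^ 2 / (2 * (n : ℝ) ^ 2)) * ‖v‖ ^ 2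
            ≤ fderiv ℝ (fderiv ℝ (clusterHam N n y)) x v v := by
  have main := clusterHam_hessian_eq N n hn y x h1 h2 h12 hy1 hy2
  have nn : ∀ (v : EuclideanSpace ℝ (Fin (n + n))) (k : Fin (N - 2 * n)) (i : Fin n),
      0 ≤ 2 / (x (Fin.castAdd n i) - y k) ^ 2 * v (Fin.castAdd n i) ^ 2
          + 2 / (x (Fin.natAdd n i) - y k) ^ 2 * v (Fin.natAdd n i) ^ 2 :=
    fun v k i => by positivity
  refine ⟨fun v => ?_, ?_⟩
  · have := Finset.sum_nonneg (s := Finset.univ) fun k _ =>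
      Finset.sum_nonneg (s := Finset.univ) fun i _ => nn v k i
    linarith [main v]
  intro L₁ L₂ hL₁ hL₂ hL c1 c2 g1 g2 v
  refine le_trans ?_ (main v)
  rw [add_mul]
  gcongr
  have hnorm : ‖v‖ ^ 2
      = ∑ i : Fin n, (v (Fin.castAdd n i) ^ 2 + v (Fin.natAdd n i) ^ 2) := by
    rw [EuclideanSpace.norm_sq_eq, Fin.sum_univ_add, Finset.sum_add_distrib]
    simp
  rw [hnorm, Finset.mul_sum, Finset.sum_comm]
  refine Finset.sum_le_sum fun i _ => ?_
  have hn0 : (0 : ℝ) < n := by exact_mod_cast i.pos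
  have hN0 : (0 : ℝ) < N := by exact_mod_cast (by omega : 0 < N)
  have b1 := gap_bound hN0 hn0 (c1 i) g1
  have b2 := gap_bound hN0 hn0 (c2 i) g2
  rw [mul_add, Finset.sum_add_distrib]
  refine add_le_add ?_ ?_
  · refine le_trans (mul_le_mul_of_nonneg_right b1 (sq_nonneg _)) ?_
    exact Finset.single_le_sum
      (f := fun k => 2 / (x (Fin.castAdd n i) - y k) ^ 2 * v (Fin.castAdd n i) ^ 2)
      (fun k _ => by positivity) (Finset.mem_univ _)
  · refine le_trans (mul_le_mul_of_nonneg_right b2 (sq_nonneg _)) ?_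
    exact Finset.single_le_sum
      (f := fun k => 2 / (x (Fin.natAdd n i) - y k) ^ 2 * v (Fin.natAdd n i) ^ 2)
      (fun k _ => by positivity) (Finset.mem_univ _)
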